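/- arXiv:2406.00331 — 2 statements merged into one kernel-verified Lean document; each statement's English description precedes it below -/
import Mathlib

section
/- For every positive integer k and every complex number s = σ + it with σ > 1/2 and s ≠ 1, the series Σ_{n ≥ -k} (-1)^n ℓ_{n,k} ((s-1)/s)^n converges absolutely and its sum equals ζ(s)^k. -/
open scoped Real Topology
open Complex Filter MeasureTheory Finset Asymptotics

/-- The analytic extension of `s ↦ ((s-1) * ζ(s))^k` to `s = 1` (where its value is `1`). -/
noncomputable def zetaPowAux (k : ℕ) : ℂ → ℂ :=
  Function.update (fun s : ℂ => ((s - 1) * riemannZeta s) ^ k) 1 1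

/-- `lam k j` is the Taylor coefficient `λ_{j,k}`, i.e. the `j`-th derivative at `s = 1` of the
analytic extension of `(s-1)^k ζ(s)^k`; these numbers are real, and we record their real part. -/
noncomputable def lam (k j : ℕ) : ℝ :=
  (iteratedDeriv j (zetaPowAux k) 1).re

/-- The Fourier coefficients `ℓ_{n,k}` for `n ≥ -k` (an integer index). -/
noncomputable def ell (k : ℕ) (n : ℤ) : ℝ :=
  if 1 ≤ n then
    (-1 : ℝ) ^ n.toNat *
      ∑ j ∈ Finset.Icc 1 n.toNat,
        ((n.toNat - 1).choose (j - 1) : ℝ) * lam k (j + k) / (Nat.factorial (j + k))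
  else
    (-1 : ℝ) ^ k *
      ∑ j ∈ Finset.range ((k + n).toNat + 1),
        ((k - j).choose (-n).toNat : ℝ) * (-1 : ℝ) ^ j * lam k j / (Nat.factorial j)

/-- The Lindelöf Hypothesis: `ζ(1/2 + it) = O(|t|^ε)` for every `ε > 0`. -/
def LindelofHypothesis : Prop :=
  ∀ ε : ℝ, 0 < ε → ∃ C : ℝ, ∀ t : ℝ, 1 ≤ |t| →
    ‖riemannZeta (1 / 2 + t * Complex.I)‖ ≤ C * |t| ^ ε

/-- `dk k n` is the Piltz divisor function `d_k(n)`: the number of representations of `n` as an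
ordered product of `k` positive integers (the `k`-th Dirichlet-convolution power of `ζ`). -/
noncomputable def dk (k n : ℕ) : ℕ := (ArithmeticFunction.zeta ^ k) n

/-- The coefficients `a_{j,k}` of the polynomial `P_k`. -/
noncomputable def aCoef (k j : ℕ) : ℝ :=
  (-1 : ℝ) ^ (k - 1 - j) *
    ∑ i ∈ Finset.range (k - 1 - j + 1), (-1 : ℝ) ^ i * lam k i / (Nat.factorial i)

/-- The error term `Δ_k(x) = (Σ_{1 ≤ n ≤ x} d_k(n)) - x P_k(log x)` in the Piltz divisor
problem. -/
noncomputable def Deltak (k : ℕ) (x : ℝ) : ℝ :=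
  (∑ n ∈ Finset.Icc 1 ⌊x⌋₊, (dk k n : ℝ)) -
    x * ∑ j ∈ Finset.range k, aCoef k j / (Nat.factorial j) * (Real.log x) ^ j

/-- The `n`-th Laguerre polynomial. -/
noncomputable def laguerre (n : ℕ) (u : ℝ) : ℝ :=
  ∑ j ∈ Finset.range (n + 1), (n.choose j : ℝ) * (-1 : ℝ) ^ j * u ^ j / (Nat.factorial j)

/-- The Bessel function of the first kind of order `0`. -/
noncomputable def besselJ0 (u : ℝ) : ℝ :=
  ∑' m : ℕ, (-1 : ℝ) ^ m * (u / 2) ^ (2 * m) / ((Nat.factorial m : ℝ) ^ 2)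

/-- `φ_k(x) = ∫_1^∞ Δ_k(r) J₀(2 √(x log r)) r⁻² dr`. -/
noncomputable def phik (k : ℕ) (x : ℝ) : ℝ :=
  ∫ r in Set.Ioi (1 : ℝ), Deltak k r * besselJ0 (2 * Real.sqrt (x * Real.log r)) / r ^ 2

open scoped ComplexConjugate

theorem differentiable_zetaPowAux (k : ℕ) : Differentiable ℂ (zetaPowAux k) := by
  have off_one : ∀ s : ℂ, s ≠ 1 → DifferentiableAt ℂ (zetaPowAux k) s := fun s hs => by
    have h : DifferentiableAt ℂ (fun s : ℂ => ((s - 1) * riemannZeta s) ^ k) s :=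
      ((differentiableAt_id.sub_const 1).mul (differentiableAt_riemannZeta hs)).pow k
    refine h.congr_of_eventuallyEq ?_
    filter_upwards [isOpen_ne.mem_nhds hs] with t ht
    exact Function.update_of_ne ht _ _
  intro s
  rcases eq_or_ne s 1 with rfl | hs
  · refine (analyticAt_of_differentiable_on_punctured_nhds_of_continuousAt ?_ ?_).differentiableAt
    · filter_upwards [self_mem_nhdsWithin] with t ht using off_one t ht
    · rw [zetaPowAux, continuousAt_update_same]
      simpa using riemannZeta_residue_one.pow k
  · exact off_one s hs

theorem conj_comp_zetaPowAux_comp_conj (k : ℕ) :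
    conj ∘ zetaPowAux k ∘ conj = zetaPowAux k := by
  ext s
  rcases eq_or_ne s 1 with rfl | hs
  · simp [zetaPowAux]
  · have hs' : conj s ≠ 1 := fun h => hs (by simpa using congrArg conj h)
    simp [zetaPowAux, Function.update_of_ne hs, Function.update_of_ne hs', riemannZeta_conj]

theorem conj_comp_iteratedDeriv_comp_conj {f : ℂ → ℂ} (hf : conj ∘ f ∘ conj = f) (j : ℕ) :
    conj ∘ iteratedDeriv j f ∘ conj = iteratedDeriv j f := by
  induction j with
  | zero => simpa using hf
  | succ j ih => rw [iteratedDeriv_succ, ← deriv_conj_conj, ih]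

theorem ofReal_lam (k j : ℕ) : (lam k j : ℂ) = iteratedDeriv j (zetaPowAux k) 1 := by
  refine conj_eq_iff_re.mp ?_
  simpa using congrFun
    (conj_comp_iteratedDeriv_comp_conj (conj_comp_zetaPowAux_comp_conj k) j) 1

/-- The Taylor expansion of `(s-1)^k ζ(s)^k` at `s = 1`. -/
theorem hasSum_lam (k : ℕ) (w : ℂ) :
    HasSum (fun j : ℕ => (lam k j / j.factorial : ℂ) * w ^ j) (zetaPowAux k (1 + w)) := by
  have h := hasSum_taylorSeries_of_entire (differentiable_zetaPowAux k) 1 (1 + w)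
  refine h.congr_fun ?_
  intro j
  simp [ofReal_lam]
  ring

/-- The coefficient of `z ^ i` in the power series of `(1 - z) ^ (k - j)`, where `k - j` is a
possibly negative integer. -/
def oneSubPowCoeff (k j i : ℕ) : ℤ :=
  if j ≤ k then (-1) ^ i * (k - j).choose i else (i + (j - k - 1)).choose (j - k - 1)

theorem hasSum_choose_mul_pow {R : Type*} [CommSemiring R] [TopologicalSpace R]
    (n : ℕ) (x : R) : HasSum (fun i : ℕ => (n.choose i : R) * x ^ i) ((1 + x) ^ n) := by
  have h : (1 + x) ^ n = ∑ i ∈ range (n + 1), (n.choose i : R) * x ^ i := by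
    rw [add_comm, add_pow]
    exact sum_congr rfl fun i _ => by ring
  rw [h]
  refine hasSum_sum_of_ne_finset_zero fun i hi => ?_
  rw [Nat.choose_eq_zero_of_lt (by simpa using hi)]
  simp

theorem hasSum_oneSubPowCoeff {𝕜 : Type*} [RCLike 𝕜] (k j : ℕ) {z : 𝕜} (hz : ‖z‖ < 1) :
    HasSum (fun i : ℕ => (oneSubPowCoeff k j i : 𝕜) * z ^ i) ((1 - z) ^ k / (1 - z) ^ j) := by
  have h1 : 1 - z ≠ 0 := fun h => by
    rw [← sub_eq_zero.mp h] at hz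
    simp at hz
  rcases le_or_gt j k with hjk | hjk
  · rw [← pow_sub₀ _ h1 hjk |>.trans (div_eq_mul_inv _ _).symm, sub_eq_add_neg]
    refine (hasSum_choose_mul_pow (k - j) (-z)).congr_fun fun i => ?_
    simp only [oneSubPowCoeff, if_pos hjk]
    push_cast
    rw [neg_pow z]
    ring
  · obtain ⟨d, rfl⟩ := Nat.exists_eq_add_of_lt hjk
    have hd : (1 - z) ^ k / (1 - z) ^ (k + d + 1) = 1 / (1 - z) ^ (d + 1) := by
      field_simp
      ring
    rw [hd]
    refine (hasSum_choose_mul_geometric_of_norm_lt_one d hz).congr_fun fun i => ?_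
    have : k + d + 1 - k - 1 = d := by omega
    simp [oneSubPowCoeff, this]

theorem summable_norm_oneSubPowCoeff (k j : ℕ) {z : ℂ} (hz : ‖z‖ < 1) :
    Summable fun i : ℕ => ‖(oneSubPowCoeff k j i : ℂ) * z ^ i‖ :=
  (hasSum_oneSubPowCoeff k j hz).summable.norm

theorem tsum_norm_oneSubPowCoeff {k j : ℕ} (hjk : k < j) {z : ℂ} (hz : ‖z‖ < 1) :
    ∑' i : ℕ, ‖(oneSubPowCoeff k j i : ℂ) * z ^ i‖ = (1 - ‖z‖) ^ k / (1 - ‖z‖) ^ j := by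
  rw [← (hasSum_oneSubPowCoeff k j (z := ‖z‖) (by simpa using hz)).tsum_eq]
  refine tsum_congr fun i => ?_
  simp [oneSubPowCoeff, if_neg hjk.not_ge]

theorem summable_lam_mul_oneSubPowCoeff (k : ℕ) {z : ℂ} (hz : ‖z‖ < 1) :
    Summable fun p : ℕ × ℕ => (lam k p.1 / p.1.factorial : ℂ) * z ^ p.1 *
      ((oneSubPowCoeff k p.1 p.2 : ℂ) * z ^ p.2) := by
  refine Summable.of_norm ((summable_prod_of_nonneg fun _ => norm_nonneg _).mpr ?_)
  simp only [norm_mul ((lam k _ / _ : ℂ) * _) _, tsum_mul_left]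
  refine ⟨fun j => (summable_norm_oneSubPowCoeff k j hz).mul_left _, ?_⟩
  rw [← summable_nat_add_iff (k + 1)]
  have hpos : 0 < 1 - ‖z‖ := sub_pos.mpr hz
  have h := ((summable_nat_add_iff (k + 1)).mpr
    (hasSum_lam k ((‖z‖ / (1 - ‖z‖) : ℝ) : ℂ)).summable.norm).mul_left ((1 - ‖z‖) ^ k)
  refine h.congr fun j => ?_
  rw [tsum_norm_oneSubPowCoeff (by omega) hz, norm_mul, norm_mul, norm_pow, norm_pow,
    norm_real, Real.norm_of_nonneg (by positivity), div_pow]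
  ring

theorem HasSum.sum_antidiagonal {f : ℕ × ℕ → ℂ} {a : ℂ} (hf : HasSum f a) :
    HasSum (fun m : ℕ => ∑ p ∈ antidiagonal m, f p) a := by
  rw [← HasAntidiagonal.sigmaAntidiagonalEquivProd.hasSum_iff] at hf
  refine hf.sigma fun m => ?_
  rw [← sum_coe_sort]
  exact hasSum_fintype _

theorem hasSum_lam_mul_oneSubPowCoeff (k : ℕ) {z : ℂ} (hz : ‖z‖ < 1) :
    HasSum (fun m : ℕ => (∑ p ∈ antidiagonal m,
      (lam k p.1 / p.1.factorial : ℂ) * oneSubPowCoeff k p.1 p.2) * z ^ m)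
      ((1 - z) ^ k * zetaPowAux k (1 + z / (1 - z))) := by
  have hsum := (summable_lam_mul_oneSubPowCoeff k hz).hasSum
  have hrow := hsum.prod_fiberwise fun j =>
    (hasSum_oneSubPowCoeff k j hz).mul_left ((lam k j / j.factorial : ℂ) * z ^ j)
  have htotal : HasSum (fun j : ℕ => (lam k j / j.factorial : ℂ) * z ^ j *
      ((1 - z) ^ k / (1 - z) ^ j)) ((1 - z) ^ k * zetaPowAux k (1 + z / (1 - z))) := by
    refine ((hasSum_lam k (z / (1 - z))).mul_left ((1 - z) ^ k)).congr_fun fun j => ?_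
    rw [div_pow]
    ring
  rw [hrow.unique htotal] at hsum
  refine hsum.sum_antidiagonal.congr_fun fun m => ?_
  rw [sum_mul]
  refine sum_congr rfl fun p hp => ?_
  rw [← mem_antidiagonal.mp hp, pow_add]
  ring

theorem neg_one_zpow_mul_ell (k m : ℕ) :
    (-1 : ℝ) ^ ((m : ℤ) - k) * ell k ((m : ℤ) - k) =
      ∑ p ∈ antidiagonal m, lam k p.1 / p.1.factorial * oneSubPowCoeff k p.1 p.2 := by
  rw [Nat.sum_antidiagonal_eq_sum_range_succ_mk]
  rcases le_or_gt m k with hmk | hmk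
  · have hn : ¬ (1 : ℤ) ≤ m - k := by omega
    have h1 : ((k : ℤ) + (m - k)).toNat = m := by omega
    have h2 : (-((m : ℤ) - k)).toNat = k - m := by omega
    rw [ell, if_neg hn, h1, h2, ← mul_assoc, ← zpow_natCast (-1 : ℝ) k,
      ← zpow_add₀ (by norm_num), sub_add_cancel, zpow_natCast, mul_sum]
    refine sum_congr rfl fun j hj => ?_
    have hjm : j ≤ m := Nat.lt_succ_iff.mp (mem_range.mp hj)
    have hc : (k - j).choose (m - j) = (k - j).choose (k - m) := by
      rw [← Nat.choose_symm (by omega : k - m ≤ k - j)]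
      congr 1
      omega
    have hsign : (-1 : ℝ) ^ (m - j) = (-1) ^ m * (-1) ^ j := by
      rw [← pow_add, show m + j = m - j + 2 * j by omega, pow_add, pow_mul]
      simp
    simp only [oneSubPowCoeff, if_pos (hjm.trans hmk)]
    push_cast
    rw [hc, hsign]
    ring
  · obtain ⟨d, rfl⟩ := Nat.exists_eq_add_of_lt hmk
    have hn : (1 : ℤ) ≤ ((k + d + 1 : ℕ) : ℤ) - k := by omega
    have h1 : (((k + d + 1 : ℕ) : ℤ) - k) = ((d + 1 : ℕ) : ℤ) := by push_cast; ring
    rw [ell, if_pos hn, h1, Int.toNat_natCast, zpow_natCast, ← mul_assoc, ← mul_pow]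
    norm_num only [one_pow, one_mul]
    rw [show (k + d + 1).succ = (k + 1) + (d + 1) by omega, sum_range_add,
      sum_eq_zero (s := range (k + 1)), zero_add,
      ← Ico_add_one_right_eq_Icc, sum_Ico_eq_sum_range]
    · refine sum_congr (by simp) fun i hi => ?_
      have hi' : i ≤ d := by simpa [Nat.lt_succ_iff] using hi
      have e1 : k + d + 1 - (k + 1 + i) + i = d := by omega
      have e2 : k + 1 + i - k - 1 = i := by omega
      have e3 : 1 + i + k = k + 1 + i := by omega
      simp only [oneSubPowCoeff, if_neg (by omega : ¬ k + 1 + i ≤ k), e1, e2, e3,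
        Nat.add_sub_cancel, Nat.add_sub_cancel_left]
      push_cast
      ring
    · intro j hj
      have hj' : j ≤ k := Nat.lt_succ_iff.mp (mem_range.mp hj)
      simp only [oneSubPowCoeff, if_pos hj']
      rw [Nat.choose_eq_zero_of_lt (by omega)]
      simp

theorem norm_sub_one_div_self_lt_one {s : ℂ} (hs : 1 / 2 < s.re) : ‖(s - 1) / s‖ < 1 := by
  have h0 : s ≠ 0 := fun h => by norm_num [h] at hs
  rw [norm_div, div_lt_one (norm_pos_iff.mpr h0), ← sq_lt_sq₀ (norm_nonneg _) (norm_nonneg _),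
    Complex.sq_norm, Complex.sq_norm, normSq_apply, normSq_apply]
  simp only [sub_re, sub_im, one_re, one_im]
  nlinarith

theorem hasSum_ell (k : ℕ) {s : ℂ} (hs : 1 / 2 < s.re) (hs1 : s ≠ 1) :
    HasSum (fun m : ℕ => (-1 : ℂ) ^ ((m : ℤ) - k) * (ell k ((m : ℤ) - k) : ℂ) *
        ((s - 1) / s) ^ ((m : ℤ) - k)) (riemannZeta s ^ k) := by
  have h0 : s ≠ 0 := fun h => by norm_num [h] at hs
  have h1 : s - 1 ≠ 0 := sub_ne_zero.mpr hs1
  have hz : (s - 1) / s ≠ 0 := div_ne_zero h1 h0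
  have h := (hasSum_lam_mul_oneSubPowCoeff k (norm_sub_one_div_self_lt_one hs)).mul_right
    ((((s - 1) / s) ^ k)⁻¹)
  have hsub : 1 - (s - 1) / s = s⁻¹ := by
    field_simp
    ring
  have hone : 1 + (s - 1) / s / s⁻¹ = s := by
    field_simp
    ring
  have hval : s⁻¹ ^ k * zetaPowAux k s * (((s - 1) / s) ^ k)⁻¹ = riemannZeta s ^ k := by
    rw [zetaPowAux, Function.update_of_ne hs1, mul_pow, div_pow, inv_pow]
    field_simp
  rw [hsub, hone, hval] at h
  refine h.congr_fun fun m => ?_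
  have hcoeff := congrArg (fun x : ℝ => (x : ℂ)) (neg_one_zpow_mul_ell k m)
  push_cast at hcoeff
  rw [hcoeff, zpow_sub₀ hz, zpow_natCast, zpow_natCast, div_eq_mul_inv _ (((s - 1) / s) ^ k),
    mul_assoc]

theorem stmt0 (k : ℕ) (hk : 0 < k) (s : ℂ) (hs : 1 / 2 < s.re) (hs1 : s ≠ 1) :
    (Summable fun m : ℕ =>
      ‖(-1 : ℂ) ^ ((m : ℤ) - k) * (ell k ((m : ℤ) - k) : ℂ) *
        ((s - 1) / s) ^ ((m : ℤ) - k)‖) ∧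
    ∑' m : ℕ, (-1 : ℂ) ^ ((m : ℤ) - k) * (ell k ((m : ℤ) - k) : ℂ) *
        ((s - 1) / s) ^ ((m : ℤ) - k) = riemannZeta s ^ k := by
  have h := hasSum_ell k hs hs1
  exact ⟨h.summable.norm, h.tsum_eq⟩
end

section
/- For every positive integer k and every integer n ≥ 0, the integral ∫_1^∞ Δ_k(x) L_n(log x) x^{-2} dx converges absolutely and equals (-1)^n ℓ_{n,k}. -/
open scoped Real Topology
open Complex Filter MeasureTheory Finset Asymptotics

/-- `f x` is a polynomial in `log x` up to a power saving, uniformly for `x ≥ 1`. -/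
def LogPolyApprox (f : ℝ → ℝ) : Prop :=
  ∃ Q : Polynomial ℝ, ∃ δ : ℝ, 0 < δ ∧ ∃ C : ℝ, ∀ x : ℝ, 1 ≤ x →
    |f x - Q.eval (Real.log x)| ≤ C * x ^ (-δ)

/-- The summatory function of `a`. -/
noncomputable def summatory (a : ℕ → ℝ) (x : ℝ) : ℝ := ∑ n ∈ Icc 1 ⌊x⌋₊, a n

lemma exists_abs_eval_log_le (Q : Polynomial ℝ) {ε : ℝ} (hε : 0 < ε) :
    ∃ C : ℝ, ∀ x : ℝ, 1 ≤ x → |Q.eval (Real.log x)| ≤ C * x ^ ε := by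
  induction Q using Polynomial.induction_on' with
  | add p q hp hq =>
    obtain ⟨C, hC⟩ := hp
    obtain ⟨D, hD⟩ := hq
    refine ⟨C + D, fun x hx => ?_⟩
    rw [Polynomial.eval_add, add_mul]
    exact (abs_add_le _ _).trans (add_le_add (hC x hx) (hD x hx))
  | monomial n a =>
    set η : ℝ := ε / (n + 1) with hη
    have hηpos : 0 < η := by positivity
    refine ⟨|a| * (1 / η) ^ n, fun x hx => ?_⟩
    have hx0 : 0 ≤ x := by linarith
    rw [Polynomial.eval_monomial, abs_mul, abs_pow, abs_of_nonneg (Real.log_nonneg hx), mul_assoc]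
    refine mul_le_mul_of_nonneg_left ?_ (abs_nonneg a)
    calc Real.log x ^ n ≤ (x ^ η / η) ^ n :=
          pow_le_pow_left₀ (Real.log_nonneg hx) (Real.log_le_rpow_div hx0 hηpos) n
      _ = (1 / η) ^ n * x ^ (η * n) := by
          rw [div_eq_mul_one_div, mul_pow, mul_comm, Real.rpow_mul hx0, Real.rpow_natCast]
      _ ≤ (1 / η) ^ n * x ^ ε := by
          refine mul_le_mul_of_nonneg_left (Real.rpow_le_rpow_of_exponent_le hx ?_) (by positivity)
          rw [hη, div_mul_eq_mul_div, div_le_iff₀ (by positivity)]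
          nlinarith

namespace LogPolyApprox

variable {f g : ℝ → ℝ}

lemma of_eq_eval (Q : Polynomial ℝ) (h : ∀ x, 1 ≤ x → f x = Q.eval (Real.log x)) :
    LogPolyApprox f :=
  ⟨Q, 1, one_pos, 0, fun x hx => by simp [h x hx]⟩

lemma of_abs_le {δ C : ℝ} (hδ : 0 < δ) (h : ∀ x, 1 ≤ x → |f x| ≤ C * x ^ (-δ)) :
    LogPolyApprox f :=
  ⟨0, δ, hδ, C, fun x hx => by simpa using h x hx⟩

lemma congr (hf : LogPolyApprox f) (h : ∀ x, 1 ≤ x → g x = f x) : LogPolyApprox g := by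
  obtain ⟨Q, δ, hδ, C, hC⟩ := hf
  exact ⟨Q, δ, hδ, C, fun x hx => by rw [h x hx]; exact hC x hx⟩

/-- The exponent may be shrunk, and the constant taken nonnegative. -/
lemma exists_of_le (hf : LogPolyApprox f) : ∃ Q : Polynomial ℝ, ∃ δ : ℝ, 0 < δ ∧ ∃ C : ℝ, 0 ≤ C ∧
    ∀ η ≤ δ, ∀ x : ℝ, 1 ≤ x → |f x - Q.eval (Real.log x)| ≤ C * x ^ (-η) := by
  obtain ⟨Q, δ, hδ, C, hC⟩ := hf
  have hC0 : 0 ≤ C := by simpa using (abs_nonneg _).trans (hC 1 le_rfl)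
  exact ⟨Q, δ, hδ, C, hC0, fun η hη x hx => (hC x hx).trans
    (mul_le_mul_of_nonneg_left (Real.rpow_le_rpow_of_exponent_le hx (neg_le_neg hη)) hC0)⟩

lemma add (hf : LogPolyApprox f) (hg : LogPolyApprox g) :
    LogPolyApprox (fun x => f x + g x) := by
  obtain ⟨P, δ, hδ, C, -, hC⟩ := hf.exists_of_le
  obtain ⟨Q, η, hη, D, -, hD⟩ := hg.exists_of_le
  refine ⟨P + Q, min δ η, lt_min hδ hη, C + D, fun x hx => ?_⟩
  rw [Polynomial.eval_add, add_mul, add_sub_add_comm]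
  exact (abs_add_le _ _).trans
    (add_le_add (hC _ (min_le_left _ _) x hx) (hD _ (min_le_right _ _) x hx))

lemma exists_abs_le (hf : LogPolyApprox f) {ε : ℝ} (hε : 0 < ε) :
    ∃ C : ℝ, 0 ≤ C ∧ ∀ x : ℝ, 1 ≤ x → |f x| ≤ C * x ^ ε := by
  obtain ⟨Q, δ, hδ, C, hC0, hC⟩ := hf.exists_of_le
  obtain ⟨D, hD⟩ := exists_abs_eval_log_le Q hε
  have hbd : ∀ x : ℝ, 1 ≤ x → |f x| ≤ (C + D) * x ^ ε := fun x hx => by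
    have h1 := hC (-ε) (by linarith) x hx
    rw [neg_neg] at h1
    have h2 := hD x hx
    calc |f x| = |(f x - Q.eval (Real.log x)) + Q.eval (Real.log x)| := by rw [sub_add_cancel]
      _ ≤ C * x ^ ε + D * x ^ ε := (abs_add_le _ _).trans (add_le_add h1 h2)
      _ = _ := by ring
  exact ⟨C + D, by simpa using (abs_nonneg _).trans (hbd 1 le_rfl), hbd⟩

lemma mul (hf : LogPolyApprox f) (hg : LogPolyApprox g) :
    LogPolyApprox (fun x => f x * g x) := by
  have hg' := hg
  obtain ⟨P, δ, hδ, C, hC0, hC⟩ := hf.exists_of_le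
  obtain ⟨Q, η, hη, D, hD0, hD⟩ := hg.exists_of_le
  set m := min δ η with hm
  have hmpos : 0 < m := lt_min hδ hη
  obtain ⟨A, hA0, hA⟩ := hg'.exists_abs_le (half_pos hmpos)
  obtain ⟨B, hB⟩ := exists_abs_eval_log_le P (half_pos hmpos)
  refine ⟨P * Q, m / 2, half_pos hmpos, C * A + B * D, fun x hx => ?_⟩
  have hx0 : 0 < x := by linarith
  have hsplit : x ^ (-m) * x ^ (m / 2) = x ^ (-(m / 2)) := by
    rw [← Real.rpow_add hx0]; ring_nf
  have h1 := hC m (min_le_left _ _) x hx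
  have h2 := hD m (min_le_right _ _) x hx
  rw [Polynomial.eval_mul]
  calc |f x * g x - P.eval (Real.log x) * Q.eval (Real.log x)|
      = |(f x - P.eval (Real.log x)) * g x
          + P.eval (Real.log x) * (g x - Q.eval (Real.log x))| := by ring_nf
    _ ≤ |f x - P.eval (Real.log x)| * |g x|
          + |P.eval (Real.log x)| * |g x - Q.eval (Real.log x)| := by
        rw [← abs_mul, ← abs_mul]; exact abs_add_le _ _
    _ ≤ (C * x ^ (-m)) * (A * x ^ (m / 2)) + (B * x ^ (m / 2)) * (D * x ^ (-m)) :=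
        add_le_add
          (mul_le_mul h1 (hA x hx) (abs_nonneg _) (mul_nonneg hC0 (Real.rpow_nonneg hx0.le _)))
          (mul_le_mul (hB x hx) h2 (abs_nonneg _) ((abs_nonneg _).trans (hB x hx)))
    _ = (C * A + B * D) * (x ^ (-m) * x ^ (m / 2)) := by ring
    _ = _ := by rw [hsplit]

lemma const (c : ℝ) : LogPolyApprox (fun _ => c) :=
  of_eq_eval (Polynomial.C c) (by simp)

lemma log_pow (m : ℕ) : LogPolyApprox (fun x => Real.log x ^ m) :=
  of_eq_eval (Polynomial.X ^ m) (by simp)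

lemma log : LogPolyApprox Real.log := of_eq_eval Polynomial.X (by simp)

lemma sub (hf : LogPolyApprox f) (hg : LogPolyApprox g) :
    LogPolyApprox (fun x => f x - g x) :=
  (hf.add ((const (-1)).mul hg)).congr fun x _ => by ring

lemma sum {ι : Type*} (s : Finset ι) {F : ι → ℝ → ℝ} (h : ∀ i ∈ s, LogPolyApprox (F i)) :
    LogPolyApprox (fun x => ∑ i ∈ s, F i x) := by
  classical
  induction s using Finset.induction_on with
  | empty => simpa using const 0
  | insert i s hi ih =>
    simp only [Finset.sum_insert hi]
    exact (h i (Finset.mem_insert_self i s)).add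
      (ih fun j hj => h j (Finset.mem_insert_of_mem hj))

lemma comp_sqrt (hf : LogPolyApprox f) : LogPolyApprox (fun x => f (Real.sqrt x)) := by
  obtain ⟨Q, δ, hδ, C, hC⟩ := hf
  refine ⟨Q.comp (Polynomial.C (1 / 2) * Polynomial.X), δ / 2, half_pos hδ, C, fun x hx => ?_⟩
  have hx0 : 0 ≤ x := by linarith
  have h := hC (Real.sqrt x) (Real.one_le_sqrt.2 hx)
  have h2 : Real.sqrt x ^ (-δ) = x ^ (-(δ / 2)) := by
    rw [Real.sqrt_eq_rpow, ← Real.rpow_mul hx0]; ring_nf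
  rw [h2, Real.log_sqrt hx0] at h
  have h3 : (Q.comp (Polynomial.C (1 / 2) * Polynomial.X)).eval (Real.log x)
      = Q.eval (Real.log x / 2) := by
    simp [div_eq_inv_mul]
  rw [h3]
  exact h

end LogPolyApprox

lemma Polynomial.exists_derivative_eq (Q : Polynomial ℝ) :
    ∃ R : Polynomial ℝ, R.derivative = Q := by
  induction Q using Polynomial.induction_on' with
  | add p q hp hq =>
    obtain ⟨P, rfl⟩ := hp
    obtain ⟨R, rfl⟩ := hq
    exact ⟨P + R, Polynomial.derivative_add⟩
  | monomial n a =>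
    refine ⟨Polynomial.monomial (n + 1) (a / (n + 1)), ?_⟩
    rw [Polynomial.derivative_monomial]
    have : (n : ℝ) + 1 ≠ 0 := by positivity
    simp [this]

/-- Integration against `dt / t` preserves approximability. -/
lemma LogPolyApprox.integral {f : ℝ → ℝ} (hf : LogPolyApprox f) (hm : Measurable f) :
    LogPolyApprox (fun x => ∫ t in Set.Ioc 1 x, f t / t) := by
  obtain ⟨Q, δ, hδ, C, hC⟩ := hf
  obtain ⟨R, hR⟩ := Polynomial.exists_derivative_eq Q
  have hQm : Measurable fun t : ℝ => Q.eval (Real.log t) :=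
    Q.continuous.measurable.comp Real.measurable_log
  set e : ℝ → ℝ := fun t => (f t - Q.eval (Real.log t)) / t with he
  have hem : Measurable e := (hm.sub hQm).div measurable_id
  have hdom : ∀ t ∈ Set.Ioi (1 : ℝ), ‖e t‖ ≤ C * t ^ (-δ - 1) := fun t ht => by
    have ht1 : (1 : ℝ) < t := ht
    have ht0 : 0 < t := by linarith
    rw [he, Real.norm_eq_abs, abs_div, abs_of_pos ht0, Real.rpow_sub_one ht0.ne', ← mul_div_assoc]
    exact div_le_div_of_nonneg_right (hC t ht1.le) ht0.le
  have hpow : IntegrableOn (fun t : ℝ => C * t ^ (-δ - 1)) (Set.Ioi 1) :=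
    (integrableOn_Ioi_rpow_of_lt (by linarith) one_pos).const_mul C
  have heI : IntegrableOn e (Set.Ioi 1) :=
    hpow.mono' hem.aestronglyMeasurable ((ae_restrict_iff' measurableSet_Ioi).2 (ae_of_all _ hdom))
  refine ⟨R + Polynomial.C ((∫ t in Set.Ioi 1, e t) - R.eval 0), δ, hδ, C / δ, fun x hx => ?_⟩
  have hx0 : 0 < x := by linarith
  have hder : ∀ t ∈ Set.uIcc 1 x, HasDerivAt (fun t => R.eval (Real.log t))
      (Q.eval (Real.log t) / t) t := fun t ht => by
    rw [Set.uIcc_of_le hx] at ht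
    have h := (R.hasDerivAt (Real.log t)).comp t
      (Real.hasDerivAt_log (by linarith [ht.1] : t ≠ 0))
    rw [hR, ← div_eq_mul_inv] at h
    exact h
  have hcont : ContinuousOn (fun t => Q.eval (Real.log t) / t) (Set.uIcc 1 x) := by
    rw [Set.uIcc_of_le hx]
    have hne : ∀ t ∈ Set.Icc 1 x, t ≠ 0 := fun t ht => by linarith [ht.1]
    exact (Q.continuous.comp_continuousOn (Real.continuousOn_log.mono hne)).div continuousOn_id hne
  have hmain : ∫ t in Set.Ioc 1 x, Q.eval (Real.log t) / t = R.eval (Real.log x) - R.eval 0 := by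
    rw [← intervalIntegral.integral_of_le hx,
      intervalIntegral.integral_eq_sub_of_hasDerivAt hder hcont.intervalIntegrable, Real.log_one]
  have hsplit : ∫ t in Set.Ioc 1 x, f t / t
      = (∫ t in Set.Ioc 1 x, Q.eval (Real.log t) / t) + ∫ t in Set.Ioc 1 x, e t := by
    rw [← integral_add]
    · refine integral_congr_ae (ae_of_all _ fun t => ?_)
      simp only [he]; ring
    · exact (intervalIntegrable_iff_integrableOn_Ioc_of_le hx).1 hcont.intervalIntegrable
    · exact heI.mono_set Set.Ioc_subset_Ioi_self
  have htail : ∫ t in Set.Ioi 1, e t = (∫ t in Set.Ioc 1 x, e t) + ∫ t in Set.Ioi x, e t := by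
    rw [← Set.Ioc_union_Ioi_eq_Ioi hx]
    exact setIntegral_union (Set.Ioc_disjoint_Ioi le_rfl) measurableSet_Ioi
      (heI.mono_set Set.Ioc_subset_Ioi_self) (heI.mono_set (Set.Ioi_subset_Ioi hx))
  have hbound : |∫ t in Set.Ioi x, e t| ≤ C / δ * x ^ (-δ) := by
    have hsub : Set.Ioi x ⊆ Set.Ioi 1 := Set.Ioi_subset_Ioi hx
    calc |∫ t in Set.Ioi x, e t| ≤ ∫ t in Set.Ioi x, C * t ^ (-δ - 1) :=
          norm_integral_le_of_norm_le (hpow.mono_set hsub)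
            ((ae_restrict_iff' measurableSet_Ioi).2 (ae_of_all _ fun t ht => hdom t (hsub ht)))
      _ = C / δ * x ^ (-δ) := by
          rw [integral_const_mul, integral_Ioi_rpow_of_lt (by linarith) hx0]
          have : δ ≠ 0 := hδ.ne'
          rw [show -δ - 1 + 1 = -δ by ring]
          field_simp
  simp only [hsplit]
  rw [hmain, htail, Polynomial.eval_add, Polynomial.eval_C]
  refine le_trans (le_of_eq ?_) hbound
  rw [← abs_neg]
  ring_nf

lemma measurable_summatory (a : ℕ → ℝ) : Measurable (summatory a) :=
  (measurable_from_nat (f := fun N : ℕ => ∑ n ∈ Icc 1 N, a n)).comp Nat.measurable_floor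

/-- Abel summation on `[1, x]`. -/
lemma summatory_mul_eq (a : ℕ → ℝ) {φ : ℝ → ℝ} {x : ℝ}
    (hφ : ∀ t ∈ Set.Icc 1 x, DifferentiableAt ℝ φ t)
    (hφ' : IntegrableOn (deriv φ) (Set.Icc 1 x)) :
    summatory (fun n => φ n * a n) x
      = φ x * summatory a x - ∫ t in Set.Ioc 1 x, deriv φ t * summatory a t := by
  set c : ℕ → ℝ := fun n => if n = 0 then 0 else a n with hc
  have hsum : ∀ (N : ℕ) (w : ℕ → ℝ), ∑ n ∈ Icc 0 N, w n * c n = ∑ n ∈ Icc 1 N, w n * a n := by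
    intro N w
    rw [← Finset.insert_Icc_add_one_left_eq_Icc (Nat.zero_le N), Finset.sum_insert (by simp)]
    simp only [hc, if_true, mul_zero, zero_add]
    refine Finset.sum_congr rfl fun n hn => ?_
    rw [if_neg (by have := (Finset.mem_Icc.1 hn).1; omega)]
  have hsum1 : ∀ N : ℕ, ∑ n ∈ Icc 0 N, c n = ∑ n ∈ Icc 1 N, a n := fun N => by
    simpa using hsum N fun _ => 1
  have h := sum_mul_eq_sub_integral_mul₀ c (by simp [hc]) x hφ hφ'
  rw [hsum _ fun n => φ n] at h
  simpa only [summatory, hsum1] using h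

lemma LogPolyApprox.summatory_div {a : ℕ → ℝ} (ha : LogPolyApprox fun x => summatory a x / x) :
    LogPolyApprox (summatory fun n => a n / n) := by
  have hm : Measurable fun x => summatory a x / x := (measurable_summatory a).div measurable_id
  refine (ha.add (ha.integral hm)).congr fun x hx => ?_
  have hne : ∀ t ∈ Set.Icc 1 x, t ≠ 0 := fun t ht => by linarith [ht.1]
  have h := summatory_mul_eq a (φ := fun t => t⁻¹) (x := x)
    (fun t ht => differentiableAt_inv (hne t ht)) (by
      rw [deriv_inv']
      exact (ContinuousOn.neg ((continuousOn_id.pow 2).inv₀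
        fun t ht => pow_ne_zero 2 (hne t ht))).integrableOn_Icc)
  rw [show (fun n : ℕ => a n / n) = fun n : ℕ => (n : ℝ)⁻¹ * a n from
    funext fun n => div_eq_inv_mul _ _, h, div_eq_inv_mul, sub_eq_add_neg, ← integral_neg]
  congr 1
  refine integral_congr_ae (ae_of_all _ fun t => ?_)
  simp only [deriv_inv']
  rw [div_div, ← sq, div_eq_inv_mul]
  ring

lemma LogPolyApprox.summatory_log_mul {a : ℕ → ℝ} (ha : LogPolyApprox (summatory a)) :
    LogPolyApprox (summatory fun n => Real.log n * a n) := by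
  refine ((LogPolyApprox.log.mul ha).sub (ha.integral (measurable_summatory a))).congr
    fun x hx => ?_
  have hne : ∀ t ∈ Set.Icc 1 x, t ≠ 0 := fun t ht => by linarith [ht.1]
  have h := summatory_mul_eq a (φ := Real.log) (x := x)
    (fun t ht => Real.differentiableAt_log (hne t ht)) (by
      rw [Real.deriv_log']
      exact (continuousOn_id.inv₀ hne).integrableOn_Icc)
  rw [h]
  congr 1
  refine integral_congr_ae (ae_of_all _ fun t => ?_)
  simp only [Real.deriv_log', div_eq_inv_mul]

lemma summatory_one (x : ℝ) : summatory (fun _ => 1) x = ⌊x⌋₊ := by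
  simp [summatory]

lemma logPolyApprox_floor_div : LogPolyApprox fun x => (⌊x⌋₊ : ℝ) / x := by
  refine ((LogPolyApprox.const 1).sub (LogPolyApprox.of_abs_le (f := fun x => (x - ⌊x⌋₊) / x)
    (C := 1) one_pos fun x hx => ?_)).congr fun x hx => ?_
  · have hx0 : 0 < x := by linarith
    have h1 := Nat.floor_le hx0.le
    have h2 := Nat.lt_floor_add_one x
    rw [abs_of_nonneg (div_nonneg (by linarith) hx0.le), Real.rpow_neg_one, one_mul,
      div_eq_mul_inv]
    exact mul_le_of_le_one_left (by positivity) (by linarith)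
  · have hx0 : x ≠ 0 := by linarith
    field_simp
    ring

lemma logPolyApprox_summatory_log_pow_div (m : ℕ) :
    LogPolyApprox (summatory fun n => Real.log n ^ m / n) := by
  induction m with
  | zero =>
    simpa using LogPolyApprox.summatory_div (a := fun _ => 1)
      (logPolyApprox_floor_div.congr fun x _ => by rw [summatory_one])
  | succ m ih =>
    convert ih.summatory_log_mul using 3 with n
    ring

/-- The sum of `Q (log (x / n)) / n` over `n ≤ √x`. -/
lemma logPolyApprox_sum_eval_log_div (Q : Polynomial ℝ) :
    LogPolyApprox fun x => ∑ n ∈ Icc 1 ⌊√x⌋₊, Q.eval (Real.log (x / n)) / n := by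
  induction Q using Polynomial.induction_on' with
  | add p q hp hq =>
    refine (hp.add hq).congr fun x _ => ?_
    rw [← Finset.sum_add_distrib]
    simp only [Polynomial.eval_add, add_div]
  | monomial m c =>
    have h := LogPolyApprox.sum (range (m + 1)) fun j _ =>
      ((LogPolyApprox.log_pow j).mul
        (logPolyApprox_summatory_log_pow_div (m - j)).comp_sqrt).mul
          (LogPolyApprox.const (c * (-1) ^ (m - j) * m.choose j))
    refine h.congr fun x hx => ?_
    simp only [summatory, Finset.mul_sum, Finset.sum_mul]
    rw [Finset.sum_comm]
    refine Finset.sum_congr rfl fun n hn => ?_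
    have hn0 : (n : ℝ) ≠ 0 := by
      have := (Finset.mem_Icc.1 hn).1
      positivity
    rw [Polynomial.eval_monomial, Real.log_div (by linarith) hn0, sub_eq_add_neg, add_pow,
      Finset.mul_sum, Finset.sum_div]
    refine Finset.sum_congr rfl fun j _ => ?_
    rw [neg_pow (Real.log n)]
    ring

lemma LogPolyApprox.sum_comp_div {g : ℝ → ℝ} (hg : LogPolyApprox g) :
    LogPolyApprox fun x => ∑ n ∈ Icc 1 ⌊√x⌋₊, g (x / n) / n := by
  obtain ⟨Q, δ, hδ, C, hC⟩ := hg
  obtain ⟨D, hD0, hD⟩ :=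
    (logPolyApprox_summatory_log_pow_div 0).exists_abs_le (half_pos hδ)
  have hC0 : 0 ≤ C := by simpa using (abs_nonneg _).trans (hC 1 le_rfl)
  refine ((logPolyApprox_sum_eval_log_div Q).add (LogPolyApprox.of_abs_le
    (f := fun x => ∑ n ∈ Icc 1 ⌊√x⌋₊, (g (x / n) - Q.eval (Real.log (x / n))) / n)
    (δ := δ / 4) (C := C * D) (by linarith) fun x hx => ?_)).congr fun x _ => ?_
  · have hx0 : 0 < x := by linarith
    have hy : 1 ≤ √x := Real.one_le_sqrt.2 hx
    have hy0 : 0 < √x := by linarith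
    have hterm : ∀ n ∈ Icc 1 ⌊√x⌋₊,
        |(g (x / n) - Q.eval (Real.log (x / n))) / n| ≤ C * √x ^ (-δ) * (Real.log n ^ 0 / n) := by
      intro n hn
      have hn1 := (Finset.mem_Icc.1 hn).1
      have hn0 : (0 : ℝ) < n := by positivity
      have hny : (n : ℝ) ≤ √x := (Nat.le_floor_iff hy0.le).1 (Finset.mem_Icc.1 hn).2
      have hxn : √x ≤ x / n := by
        rw [le_div_iff₀ hn0]
        calc √x * n ≤ √x * √x := mul_le_mul_of_nonneg_left hny hy0.le
          _ = x := Real.mul_self_sqrt hx0.le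
      rw [abs_div, abs_of_pos hn0, pow_zero, div_eq_mul_one_div]
      refine mul_le_mul_of_nonneg_right ((hC _ (hy.trans hxn)).trans ?_) (by positivity)
      exact mul_le_mul_of_nonneg_left
        (Real.rpow_le_rpow_of_nonpos hy0 hxn (by linarith)) hC0
    calc |∑ n ∈ Icc 1 ⌊√x⌋₊, (g (x / n) - Q.eval (Real.log (x / n))) / n|
        ≤ ∑ n ∈ Icc 1 ⌊√x⌋₊, C * √x ^ (-δ) * (Real.log n ^ 0 / n) :=
          (Finset.abs_sum_le_sum_abs _ _).trans (Finset.sum_le_sum hterm)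
      _ = C * √x ^ (-δ) * summatory (fun n => Real.log n ^ 0 / n) √x := by
          rw [summatory, Finset.mul_sum]
      _ ≤ C * √x ^ (-δ) * (D * √x ^ (δ / 2)) :=
          mul_le_mul_of_nonneg_left ((le_abs_self _).trans (hD _ hy)) (by positivity)
      _ = C * D * (√x ^ (-δ) * √x ^ (δ / 2)) := by ring
      _ = C * D * x ^ (-(δ / 4)) := by
          rw [← Real.rpow_add hy0, Real.sqrt_eq_rpow, ← Real.rpow_mul hx0.le]
          ring_nf
  · rw [← Finset.sum_add_distrib]
    exact Finset.sum_congr rfl fun n _ => by ring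

lemma sum_sum_Ioc_ite_le {R : Type*} [AddCommMonoid R] (F : ℕ → ℕ → R) {r N : ℕ} (hr : r ≤ N) :
    ∑ n ∈ Ioc 0 N, ∑ m ∈ Ioc 0 N, (if n * m ≤ N ∧ n ≤ r then F n m else 0)
      = ∑ n ∈ Ioc 0 r, ∑ m ∈ Ioc 0 (N / n), F n m := by
  rw [← Finset.sum_subset (Finset.Ioc_subset_Ioc_right hr)]
  · refine Finset.sum_congr rfl fun n hn => ?_
    obtain ⟨hn0, hnr⟩ := Finset.mem_Ioc.1 hn
    rw [← Finset.sum_filter]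
    refine Finset.sum_congr ?_ fun _ _ => rfl
    ext m
    simp only [Finset.mem_filter, Finset.mem_Ioc, Nat.le_div_iff_mul_le hn0, mul_comm m n, hnr,
      and_true]
    constructor
    · exact fun h => ⟨h.1.1, h.2⟩
    · exact fun h => ⟨⟨h.1, (Nat.le_mul_of_pos_left m hn0).trans h.2⟩, h.2⟩
  · intro n hn hnr
    refine Finset.sum_eq_zero fun m _ => if_neg fun h => hnr ?_
    exact Finset.mem_Ioc.2 ⟨(Finset.mem_Ioc.1 hn).1, h.2⟩

/-- The Dirichlet hyperbola method. -/
lemma sum_Ioc_mul_eq_hyperbola {R : Type*} [CommRing R] (f g : ArithmeticFunction R) {r N : ℕ}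
    (h₁ : r * r ≤ N) (h₂ : N < (r + 1) * (r + 1)) :
    ∑ n ∈ Ioc 0 N, (f * g) n
      = ∑ n ∈ Ioc 0 r, f n * ∑ m ∈ Ioc 0 (N / n), g m
        + ∑ m ∈ Ioc 0 r, g m * ∑ n ∈ Ioc 0 (N / m), f n
        - (∑ n ∈ Ioc 0 r, f n) * ∑ m ∈ Ioc 0 r, g m := by
  have hr : r ≤ N := (Nat.le_mul_self r).trans h₁
  have hA := sum_sum_Ioc_ite_le (fun n m => f n * g m) hr
  have hB := sum_sum_Ioc_ite_le (fun m n => f n * g m) hr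
  rw [Finset.sum_comm] at hB
  have hI : ∑ n ∈ Ioc 0 N, ∑ m ∈ Ioc 0 N, (if n ≤ r ∧ m ≤ r then f n * g m else 0)
      = (∑ n ∈ Ioc 0 r, f n) * ∑ m ∈ Ioc 0 r, g m := by
    have hfil : ∀ h : ℕ → R, ∑ n ∈ Ioc 0 r, h n = ∑ n ∈ Ioc 0 N, if n ≤ r then h n else 0 := by
      intro h
      rw [← Finset.sum_filter]
      refine Finset.sum_congr ?_ fun _ _ => rfl
      ext n
      simp only [Finset.mem_filter, Finset.mem_Ioc]
      omega
    rw [hfil f, hfil g, Finset.sum_mul_sum]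
    refine Finset.sum_congr rfl fun n _ => Finset.sum_congr rfl fun m _ => ?_
    by_cases hn : n ≤ r <;> by_cases hm : m ≤ r <;> simp [hn, hm]
  rw [ArithmeticFunction.sum_Ioc_mul_eq_sum_prod_filter, Finset.sum_filter, Finset.sum_product,
    eq_sub_iff_add_eq, ← hI]
  simp only [mul_comm (g _), Finset.mul_sum, Finset.sum_mul]
  rw [← hA, ← hB, ← Finset.sum_add_distrib, ← Finset.sum_add_distrib]
  refine Finset.sum_congr rfl fun n _ => ?_
  rw [← Finset.sum_add_distrib, ← Finset.sum_add_distrib]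
  refine Finset.sum_congr rfl fun m _ => ?_
  have hnm : n ≤ r → m ≤ r → n * m ≤ N := fun hn hm => (Nat.mul_le_mul hn hm).trans h₁
  have hnm' : n * m ≤ N → n ≤ r ∨ m ≤ r := fun h => by
    by_contra! hc
    exact absurd ((Nat.mul_le_mul hc.1 hc.2).trans h) (not_le.2 h₂)
  rw [mul_comm m n]
  clear hA hB hI
  grind

/-- The hyperbola method for the summatory function of `1 * a`, normalised by `x`. -/
lemma summatory_zeta_mul_div (a : ArithmeticFunction ℝ) {x : ℝ} (hx : 1 ≤ x) :
    summatory (⇑((ArithmeticFunction.zeta : ArithmeticFunction ℝ) * a)) x / x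
      = ∑ n ∈ Icc 1 ⌊√x⌋₊, (summatory a (x / n) / (x / n)) / n
        + (summatory (fun n => a n / n) √x
          - ∑ m ∈ Icc 1 ⌊√x⌋₊, a m * (x / m - ⌊x / m⌋₊) / x)
        - (⌊√x⌋₊ / √x) * (summatory a √x / √x) := by
  have hx0 : 0 < x := by linarith
  have hy0 : 0 < √x := Real.sqrt_pos.2 hx0
  have hxy : √x * √x = x := Real.mul_self_sqrt hx0.le
  have hIcc : ∀ N : ℕ, Icc 1 N = Ioc 0 N := fun N => by ext; simp; omega
  have h₁ : ⌊√x⌋₊ * ⌊√x⌋₊ ≤ ⌊x⌋₊ := by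
    refine Nat.le_floor ?_
    push_cast
    exact (mul_self_le_mul_self (Nat.cast_nonneg _) (Nat.floor_le hy0.le)).trans hxy.le
  have h₂ : ⌊x⌋₊ < (⌊√x⌋₊ + 1) * (⌊√x⌋₊ + 1) := by
    rw [Nat.floor_lt hx0.le]
    push_cast
    exact hxy.symm.le.trans_lt (mul_self_lt_mul_self hy0.le (Nat.lt_floor_add_one _))
  have hz : ∀ n : ℕ, 0 < n → (ArithmeticFunction.zeta : ArithmeticFunction ℝ) n = 1 :=
    fun n hn => by simp [hn.ne']
  have hzsum : ∀ N : ℕ, ∑ n ∈ Ioc 0 N, (ArithmeticFunction.zeta : ArithmeticFunction ℝ) n = N :=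
    fun N => by
      rw [Finset.sum_congr rfl fun n hn => hz n (Finset.mem_Ioc.1 hn).1]
      simp
  rw [summatory, hIcc, sum_Ioc_mul_eq_hyperbola _ _ h₁ h₂]
  simp only [hzsum, summatory, hIcc, Nat.floor_div_natCast]
  rw [← Finset.sum_sub_distrib, sub_div, add_div, Finset.sum_div, Finset.sum_div]
  congr 1
  · congr 1
    · refine Finset.sum_congr rfl fun n hn => ?_
      have hn0 : 0 < n := (Finset.mem_Ioc.1 hn).1
      rw [hz n hn0]
      field_simp
    · refine Finset.sum_congr rfl fun n hn => ?_
      have hn0 : 0 < n := (Finset.mem_Ioc.1 hn).1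
      field_simp
      ring
  · rw [div_mul_div_comm, hxy]

lemma LogPolyApprox.summatory_zeta_mul {a : ArithmeticFunction ℝ} (ha0 : ∀ n, 0 ≤ a n)
    (ha : LogPolyApprox fun x => summatory a x / x) :
    LogPolyApprox fun x =>
      summatory (⇑((ArithmeticFunction.zeta : ArithmeticFunction ℝ) * a)) x / x := by
  obtain ⟨C, hC0, hC⟩ := ha.exists_abs_le one_half_pos
  refine ((ha.sum_comp_div.add (ha.summatory_div.comp_sqrt.sub (LogPolyApprox.of_abs_le
    (f := fun x => ∑ m ∈ Icc 1 ⌊√x⌋₊, a m * (x / m - ⌊x / m⌋₊) / x)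
    (δ := 1 / 4) (C := C) (by norm_num) fun x hx => ?_))).sub
    (logPolyApprox_floor_div.comp_sqrt.mul ha.comp_sqrt)).congr
    fun x hx => summatory_zeta_mul_div a hx
  have hx0 : 0 < x := by linarith
  have hy : 1 ≤ √x := Real.one_le_sqrt.2 hx
  have hy0 : 0 < √x := by linarith
  have hterm : ∀ m ∈ Icc 1 ⌊√x⌋₊, |a m * (x / m - ⌊x / m⌋₊) / x| ≤ a m / x := by
    intro m _
    have hxm : 0 ≤ x / m := by positivity
    have h1 := Nat.floor_le hxm
    have h2 := Nat.lt_floor_add_one (x / m)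
    rw [abs_of_nonneg (div_nonneg (mul_nonneg (ha0 m) (by linarith)) hx0.le)]
    exact div_le_div_of_nonneg_right (mul_le_of_le_one_right (ha0 m) (by linarith)) hx0.le
  calc |∑ m ∈ Icc 1 ⌊√x⌋₊, a m * (x / m - ⌊x / m⌋₊) / x|
      ≤ ∑ m ∈ Icc 1 ⌊√x⌋₊, a m / x :=
        (Finset.abs_sum_le_sum_abs _ _).trans (Finset.sum_le_sum hterm)
    _ = (summatory a √x / √x) / √x := by
        rw [div_div, Real.mul_self_sqrt hx0.le, summatory, Finset.sum_div]
    _ ≤ C * √x ^ (1 / 2 : ℝ) / √x :=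
        div_le_div_of_nonneg_right ((le_abs_self _).trans (hC _ hy)) hy0.le
    _ = C * x ^ (-(1 / 4) : ℝ) := by
        rw [mul_div_assoc, ← Real.rpow_sub_one hy0.ne', Real.sqrt_eq_rpow, ← Real.rpow_mul hx0.le]
        norm_num

lemma logPolyApprox_summatory_dk (k : ℕ) :
    LogPolyApprox fun x => summatory (fun n => (dk k n : ℝ)) x / x := by
  induction k with
  | zero =>
    refine LogPolyApprox.of_abs_le (δ := 1) (C := 1) one_pos fun x hx => ?_
    have hone : summatory (fun n => (dk 0 n : ℝ)) x = 1 := by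
      simp only [summatory, dk, pow_zero]
      rw [Finset.sum_eq_single 1]
      · simp
      · intro n _ hn
        simp [ArithmeticFunction.one_apply_ne hn]
      · intro h
        exact absurd (Finset.mem_Icc.2 ⟨le_rfl, Nat.le_floor (by simpa using hx)⟩) h
    rw [hone, abs_of_nonneg (by positivity), Real.rpow_neg_one, one_mul, one_div]
  | succ k ih =>
    have h := LogPolyApprox.summatory_zeta_mul
      (a := ((ArithmeticFunction.zeta ^ k : ArithmeticFunction ℕ) : ArithmeticFunction ℝ))
      (fun n => by simp) ih
    rw [← ArithmeticFunction.natCoe_mul, ← pow_succ'] at h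
    exact h

/-- `f` is measurable, vanishes on `(-∞, 1]` and is `O(t ^ a)` on `[1, ∞)`. -/
structure TailBound (f : ℝ → ℂ) (a : ℝ) : Prop where
  measurable : Measurable f
  eq_zero : ∀ t ≤ 1, f t = 0
  exists_bound : ∃ C : ℝ, ∀ t, 1 ≤ t → ‖f t‖ ≤ C * t ^ a

namespace TailBound

variable {f : ℝ → ℂ} {a : ℝ}

lemma indicator {f : ℝ → ℂ} {C : ℝ} (hm : Measurable f)
    (hC : ∀ t, 1 ≤ t → ‖f t‖ ≤ C * t ^ a) :
    TailBound ((Set.Ioi 1).indicator f) a where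
  measurable := hm.indicator measurableSet_Ioi
  eq_zero t ht := Set.indicator_of_notMem (by simpa using ht) f
  exists_bound := ⟨C, fun t ht => (norm_indicator_le_norm_self f t).trans (hC t ht)⟩

lemma locallyIntegrableOn (hf : TailBound f a) : LocallyIntegrableOn f (Set.Ioi 0) := by
  obtain ⟨C, hC⟩ := hf.exists_bound
  have hg : LocallyIntegrableOn (fun t : ℝ => |C| * t ^ a) (Set.Ioi 0) := by
    refine ContinuousOn.locallyIntegrableOn (continuousOn_const.mul ?_) measurableSet_Ioi
    exact continuousOn_id.rpow_const fun t ht => Or.inl (ne_of_gt ht)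
  refine hg.mono hf.measurable.aestronglyMeasurable (ae_of_all _ fun t => ?_)
  rcases le_total t 1 with ht | ht
  · rw [hf.eq_zero t ht, norm_zero]
    exact norm_nonneg _
  · have hpow : 0 ≤ t ^ a := Real.rpow_nonneg (by linarith) a
    rw [Real.norm_of_nonneg (mul_nonneg (abs_nonneg C) hpow)]
    exact (hC t ht).trans (mul_le_mul_of_nonneg_right (le_abs_self C) hpow)

lemma isBigO_atTop (hf : TailBound f a) : f =O[atTop] (· ^ (-(-a)) : ℝ → ℝ) := by
  obtain ⟨C, hC⟩ := hf.exists_bound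
  refine IsBigO.of_bound C ?_
  filter_upwards [eventually_ge_atTop 1] with t ht
  rw [neg_neg, Real.norm_of_nonneg (Real.rpow_nonneg (by linarith) a)]
  exact hC t ht

lemma isBigO_zero (hf : TailBound f a) (b : ℝ) : f =O[𝓝[>] 0] (· ^ (-b) : ℝ → ℝ) := by
  have h : f =ᶠ[𝓝[>] 0] fun _ => 0 := by
    filter_upwards [nhdsWithin_le_nhds (Iio_mem_nhds (zero_lt_one' ℝ))] with t ht
    exact hf.eq_zero t (le_of_lt ht)
  exact h.trans_isBigO (Asymptotics.isBigO_zero _ _)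

lemma mellinConvergent (hf : TailBound f a) {w : ℂ} (hw : w.re < -a) : MellinConvergent f w :=
  mellinConvergent_of_isBigO_rpow hf.locallyIntegrableOn hf.isBigO_atTop hw
    (hf.isBigO_zero (w.re - 1)) (by linarith)

lemma hasDerivAt_mellin (hf : TailBound f a) {w : ℂ} (hw : w.re < -a) :
    HasDerivAt (mellin f) (mellin (fun t => Real.log t • f t) w) w :=
  (mellin_hasDerivAt_of_isBigO_rpow hf.locallyIntegrableOn hf.isBigO_atTop hw
    (hf.isBigO_zero (w.re - 1)) (by linarith)).2

lemma log_pow_smul (hf : TailBound f a) {b : ℝ} (hab : a < b) (m : ℕ) :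
    TailBound (fun t => (Real.log t ^ m) • f t) b where
  measurable := (Real.measurable_log.pow_const m).smul hf.measurable
  eq_zero t ht := by rw [hf.eq_zero t ht, smul_zero]
  exists_bound := by
    obtain ⟨C, hC⟩ := hf.exists_bound
    obtain ⟨D, hD⟩ := exists_abs_eval_log_le (Polynomial.X ^ m) (sub_pos.2 hab)
    refine ⟨D * C, fun t ht => ?_⟩
    have ht0 : 0 < t := by linarith
    have h := hD t ht
    rw [Polynomial.eval_pow, Polynomial.eval_X] at h
    calc ‖(Real.log t ^ m) • f t‖ = |Real.log t ^ m| * ‖f t‖ := norm_smul _ _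
      _ ≤ (D * t ^ (b - a)) * (C * t ^ a) :=
        mul_le_mul h (hC t ht) (norm_nonneg _) ((abs_nonneg _).trans h)
      _ = D * C * (t ^ (b - a) * t ^ a) := by ring
      _ = D * C * t ^ b := by rw [← Real.rpow_add ht0, sub_add_cancel]

lemma mellinConvergent_log_pow_smul (hf : TailBound f a) {w : ℂ} (hw : w.re < -a) (m : ℕ) :
    MellinConvergent (fun t => (Real.log t ^ m) • f t) w := by
  obtain ⟨b, hab, hbw⟩ := exists_between (show a < -w.re by linarith)
  exact (hf.log_pow_smul hab m).mellinConvergent (by linarith)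

lemma hasDerivAt_mellin_log_pow_smul (hf : TailBound f a) {w : ℂ} (hw : w.re < -a) (m : ℕ) :
    HasDerivAt (mellin fun t => (Real.log t ^ m) • f t)
      (mellin (fun t => (Real.log t ^ (m + 1)) • f t) w) w := by
  obtain ⟨b, hab, hbw⟩ := exists_between (show a < -w.re by linarith)
  convert (hf.log_pow_smul hab m).hasDerivAt_mellin (show w.re < -b by linarith) using 3 with t
  rw [smul_smul, pow_succ']

lemma iteratedDeriv_mellin (hf : TailBound f a) (m : ℕ) {w : ℂ} (hw : w.re < -a) :
    iteratedDeriv m (mellin f) w = mellin (fun t => (Real.log t ^ m) • f t) w := by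
  induction m generalizing w with
  | zero => simp
  | succ m ih =>
    rw [iteratedDeriv_succ]
    have h : iteratedDeriv m (mellin f) =ᶠ[𝓝 w] mellin fun t => (Real.log t ^ m) • f t := by
      filter_upwards [(isOpen_lt continuous_re continuous_const).mem_nhds hw] with z hz
      exact ih hz
    rw [h.deriv_eq]
    exact (hf.hasDerivAt_mellin_log_pow_smul hw m).deriv

lemma analyticAt_mellin (hf : TailBound f a) {w : ℂ} (hw : w.re < -a) :
    AnalyticAt ℂ (mellin f) w := by
  have hopen : IsOpen {z : ℂ | z.re < -a} := isOpen_lt continuous_re continuous_const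
  exact DifferentiableOn.analyticAt (s := {z : ℂ | z.re < -a})
    (fun z hz => (hf.hasDerivAt_mellin hz).differentiableAt.differentiableWithinAt)
    (hopen.mem_nhds hw)

end TailBound

lemma mellin_indicator_Ioi_one (f : ℝ → ℂ) (w : ℂ) :
    mellin ((Set.Ioi 1).indicator f) w = ∫ t in Set.Ioi (1 : ℝ), (t : ℂ) ^ (w - 1) * f t := by
  have h : (fun t : ℝ => (t : ℂ) ^ (w - 1) • (Set.Ioi 1).indicator f t)
      = (Set.Ioi 1).indicator fun t : ℝ => (t : ℂ) ^ (w - 1) * f t := by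
    funext t
    by_cases ht : t ∈ Set.Ioi (1 : ℝ) <;> simp [ht]
  rw [mellin, h, setIntegral_indicator measurableSet_Ioi,
    Set.inter_eq_right.2 (Set.Ioi_subset_Ioi zero_le_one)]

lemma tailBound_indicator_one : TailBound ((Set.Ioi 1).indicator fun _ => 1) 0 :=
  TailBound.indicator (C := 1) measurable_const fun t _ => by simp

lemma mellin_log_pow_indicator (j : ℕ) {w : ℂ} (hw : w.re < 0) :
    mellin (fun t => (Real.log t ^ j) • (Set.Ioi 1).indicator (fun _ => (1 : ℂ)) t) w
      = (-1) ^ (j + 1) * (j.factorial : ℂ) / w ^ (j + 1) := by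
  induction j generalizing w with
  | zero =>
    have hw0 : w ≠ 0 := fun h => by simp [h] at hw
    simp only [pow_zero, one_smul]
    rw [mellin_indicator_Ioi_one]
    simp only [mul_one]
    rw [integral_Ioi_cpow_of_lt (by rw [sub_re, one_re]; linarith) one_pos]
    simp
  | succ j ih =>
    have hw0 : w ≠ 0 := fun h => by simp [h] at hw
    have h1 := tailBound_indicator_one.hasDerivAt_mellin_log_pow_smul (w := w) (by simpa using hw) j
    have heq : (mellin fun t => (Real.log t ^ j) • (Set.Ioi 1).indicator (fun _ => (1 : ℂ)) t)
        =ᶠ[𝓝 w] fun z => (-1) ^ (j + 1) * (j.factorial : ℂ) * (z ^ (j + 1))⁻¹ := by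
      filter_upwards [(isOpen_lt continuous_re continuous_const).mem_nhds hw] with z hz
      rw [ih hz, div_eq_mul_inv]
    have h2 := (((hasDerivAt_pow (j + 1) w).inv (pow_ne_zero _ hw0)).const_mul
      ((-1) ^ (j + 1) * (j.factorial : ℂ))).congr_of_eventuallyEq heq
    rw [h1.unique h2, Nat.factorial_succ]
    push_cast
    field_simp
    ring

/-- The `i`-th Taylor coefficient of `f` at `1`. -/
noncomputable def taylorCoeffOne (f : ℂ → ℂ) (i : ℕ) : ℂ := iteratedDeriv i f 1 / i.factorial

lemma taylorCoeffOne_congr {f g : ℂ → ℂ} (h : f =ᶠ[𝓝 1] g) (i : ℕ) :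
    taylorCoeffOne f i = taylorCoeffOne g i := by
  rw [taylorCoeffOne, taylorCoeffOne, h.iteratedDeriv_eq]

lemma taylorCoeffOne_add {f g : ℂ → ℂ} (hf : AnalyticAt ℂ f 1) (hg : AnalyticAt ℂ g 1) (i : ℕ) :
    taylorCoeffOne (fun s => f s + g s) i = taylorCoeffOne f i + taylorCoeffOne g i := by
  rw [taylorCoeffOne, iteratedDeriv_fun_add hf.contDiffAt hg.contDiffAt, add_div]
  rfl

lemma taylorCoeffOne_const_zero (c : ℂ) : taylorCoeffOne (fun _ => c) 0 = c := by
  simp [taylorCoeffOne]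

lemma taylorCoeffOne_const_succ (c : ℂ) (i : ℕ) : taylorCoeffOne (fun _ => c) (i + 1) = 0 := by
  simp [taylorCoeffOne, iteratedDeriv_const]

lemma taylorCoeffOne_sub_one_mul_zero (f : ℂ → ℂ) :
    taylorCoeffOne (fun s => (s - 1) * f s) 0 = 0 := by
  simp [taylorCoeffOne]

lemma taylorCoeffOne_sub_one_mul_succ {f : ℂ → ℂ} (hf : AnalyticAt ℂ f 1) (i : ℕ) :
    taylorCoeffOne (fun s => (s - 1) * f s) (i + 1) = taylorCoeffOne f i := by
  have hid : ContDiffAt ℂ (i + 1 : ℕ) (fun s : ℂ => s - 1) 1 := by fun_prop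
  have hder : ∀ j, iteratedDeriv j (fun s : ℂ => s - 1) 1 = if j = 1 then 1 else 0 := by
    intro j
    obtain (_ | _ | j) := j <;> simp [iteratedDeriv_succ', iteratedDeriv_const]
  rw [taylorCoeffOne, taylorCoeffOne, iteratedDeriv_fun_mul hid hf.contDiffAt,
    Finset.sum_eq_single 1]
  · rw [hder, if_pos rfl, Nat.choose_one_right, Nat.factorial_succ, Nat.add_sub_cancel]
    have h1 : ((i : ℂ) + 1) ≠ 0 := Nat.cast_add_one_ne_zero i
    have h2 : ((i.factorial : ℕ) : ℂ) ≠ 0 := Nat.cast_ne_zero.2 i.factorial_ne_zero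
    push_cast
    field_simp
  · intro j _ hj
    rw [hder, if_neg hj]
    ring
  · intro h
    exact absurd (Finset.mem_range.2 (by omega)) h

lemma AnalyticAt.sub_one_mul {f : ℂ → ℂ} (hf : AnalyticAt ℂ f 1) :
    AnalyticAt ℂ (fun s => (s - 1) * f s) 1 :=
  (analyticAt_id.sub analyticAt_const).mul hf

/-- The function `(s - 1) ^ m * (G s + ∑ j < m, j! q j / (s - 1) ^ (j + 1))` with its removable
singularity at `1` removed. -/
noncomputable def clearPoles (G : ℂ → ℂ) (q : ℕ → ℂ) : ℕ → ℂ → ℂ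
  | 0 => G
  | m + 1 => fun s => (s - 1) * clearPoles G q m s + m.factorial * q m

section ClearPoles

variable {G : ℂ → ℂ} {q : ℕ → ℂ}

lemma analyticAt_clearPoles (hG : AnalyticAt ℂ G 1) (m : ℕ) :
    AnalyticAt ℂ (clearPoles G q m) 1 := by
  induction m with
  | zero => exact hG
  | succ m ih => exact ih.sub_one_mul.add analyticAt_const

lemma clearPoles_eq {s : ℂ} (hs : s ≠ 1) (m : ℕ) : clearPoles G q m s
    = (s - 1) ^ m * (G s + ∑ j ∈ range m, q j * (j.factorial / (s - 1) ^ (j + 1))) := by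
  have hs' : s - 1 ≠ 0 := sub_ne_zero.2 hs
  induction m with
  | zero => simp [clearPoles]
  | succ m ih =>
    simp only [clearPoles]
    rw [ih, Finset.sum_range_succ]
    field_simp
    ring

lemma taylorCoeffOne_clearPoles_succ_zero (hG : AnalyticAt ℂ G 1) (m : ℕ) :
    taylorCoeffOne (clearPoles G q (m + 1)) 0 = m.factorial * q m := by
  rw [clearPoles, taylorCoeffOne_add (analyticAt_clearPoles hG m).sub_one_mul analyticAt_const,
    taylorCoeffOne_const_zero, taylorCoeffOne_sub_one_mul_zero, zero_add]

lemma taylorCoeffOne_clearPoles_succ_succ (hG : AnalyticAt ℂ G 1) (m i : ℕ) :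
    taylorCoeffOne (clearPoles G q (m + 1)) (i + 1) = taylorCoeffOne (clearPoles G q m) i := by
  have h := analyticAt_clearPoles (q := q) hG m
  rw [clearPoles, taylorCoeffOne_add h.sub_one_mul analyticAt_const,
    taylorCoeffOne_const_succ, add_zero]
  exact taylorCoeffOne_sub_one_mul_succ h i

lemma taylorCoeffOne_clearPoles_polar (hG : AnalyticAt ℂ G 1) (m j : ℕ) :
    taylorCoeffOne (clearPoles G q (j + 1 + m)) m = j.factorial * q j := by
  induction m with
  | zero => exact taylorCoeffOne_clearPoles_succ_zero hG j
  | succ m ih => rw [← add_assoc, taylorCoeffOne_clearPoles_succ_succ hG, ih]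

lemma taylorCoeffOne_clearPoles_regular (hG : AnalyticAt ℂ G 1) (m i : ℕ) :
    taylorCoeffOne (clearPoles G q m) (i + m) = taylorCoeffOne G i := by
  induction m with
  | zero => rfl
  | succ m ih => rw [← add_assoc, taylorCoeffOne_clearPoles_succ_succ hG, ih]

end ClearPoles

lemma analyticAt_sub_one_pow_mul {Z : ℂ → ℂ} (hZ : AnalyticAt ℂ Z 1) (d : ℕ) :
    AnalyticAt ℂ (fun s => (s - 1) ^ d * Z s) 1 :=
  ((analyticAt_id.sub analyticAt_const).pow d).mul hZ

lemma taylorCoeffOne_sub_one_pow_mul {Z : ℂ → ℂ} (hZ : AnalyticAt ℂ Z 1) (d i : ℕ) :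
    taylorCoeffOne (fun s => (s - 1) ^ d * Z s) (i + d) = taylorCoeffOne Z i := by
  induction d with
  | zero => simp
  | succ d ih =>
    simp only [pow_succ', mul_assoc]
    rw [← add_assoc, taylorCoeffOne_sub_one_mul_succ (analyticAt_sub_one_pow_mul hZ d), ih]

lemma taylorCoeffOne_sub_one_pow_mul_of_lt {Z : ℂ → ℂ} (hZ : AnalyticAt ℂ Z 1) {d i : ℕ}
    (hi : i < d) : taylorCoeffOne (fun s => (s - 1) ^ d * Z s) i = 0 := by
  induction d generalizing i with
  | zero => omega
  | succ d ih =>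
    simp only [pow_succ', mul_assoc]
    cases i with
    | zero => exact taylorCoeffOne_sub_one_mul_zero _
    | succ i =>
      rw [taylorCoeffOne_sub_one_mul_succ (analyticAt_sub_one_pow_mul hZ d)]
      exact ih (by omega)

lemma taylorCoeffOne_id_mul_zero {H : ℂ → ℂ} :
    taylorCoeffOne (fun s => s * H s) 0 = taylorCoeffOne H 0 := by
  simp [taylorCoeffOne]

lemma taylorCoeffOne_id_mul_succ {H : ℂ → ℂ} (hH : AnalyticAt ℂ H 1) (i : ℕ) :
    taylorCoeffOne (fun s => s * H s) (i + 1)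
      = taylorCoeffOne H i + taylorCoeffOne H (i + 1) := by
  rw [← taylorCoeffOne_sub_one_mul_succ hH i,
    ← taylorCoeffOne_add hH.sub_one_mul hH]
  exact taylorCoeffOne_congr (Eventually.of_forall fun s => by ring) _

/-- The Taylor coefficients of `H` when `s * H s = (s - 1) ^ d * Z s` near `1`. -/
lemma taylorCoeffOne_of_id_mul_eq {H Z : ℂ → ℂ} {d : ℕ} (hH : AnalyticAt ℂ H 1)
    (hZ : AnalyticAt ℂ Z 1) (h : (fun s => s * H s) =ᶠ[𝓝 1] fun s => (s - 1) ^ d * Z s) :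
    (∀ i < d, taylorCoeffOne H i = 0) ∧ ∀ i, taylorCoeffOne H (i + d)
      = (-1) ^ i * ∑ l ∈ range (i + 1), (-1) ^ l * taylorCoeffOne Z l := by
  have hlow : ∀ i < d, taylorCoeffOne H i = 0 := by
    intro i
    induction i with
    | zero =>
      intro hi
      rw [← taylorCoeffOne_id_mul_zero, taylorCoeffOne_congr h,
        taylorCoeffOne_sub_one_pow_mul_of_lt hZ hi]
    | succ i ih =>
      intro hi
      have h1 := taylorCoeffOne_id_mul_succ hH i
      rw [taylorCoeffOne_congr h, taylorCoeffOne_sub_one_pow_mul_of_lt hZ hi, ih (by omega),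
        zero_add] at h1
      exact h1.symm
  refine ⟨hlow, fun i => ?_⟩
  induction i with
  | zero =>
    have h0 : taylorCoeffOne H d = taylorCoeffOne (fun s => s * H s) d := by
      cases d with
      | zero => exact taylorCoeffOne_id_mul_zero.symm
      | succ d => rw [taylorCoeffOne_id_mul_succ hH, hlow d (by omega), zero_add]
    have h1 := taylorCoeffOne_sub_one_pow_mul hZ d 0
    rw [zero_add] at h1
    simp [h0, taylorCoeffOne_congr h, h1]
  | succ i ih =>
    have h1 := taylorCoeffOne_id_mul_succ hH (i + d)
    rw [taylorCoeffOne_congr h, add_right_comm, taylorCoeffOne_sub_one_pow_mul hZ, ih] at h1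
    rw [Finset.sum_range_succ, eq_sub_of_add_eq' h1.symm, mul_add, ← mul_assoc, ← mul_pow]
    norm_num [pow_succ]
    ring

lemma analyticAt_zetaPowAux (k : ℕ) : AnalyticAt ℂ (zetaPowAux k) 1 := by
  refine analyticAt_of_differentiable_on_punctured_nhds_of_continuousAt ?_ ?_
  · filter_upwards [self_mem_nhdsWithin] with s hs
    have hs' : s ≠ 1 := hs
    have hd : DifferentiableAt ℂ (fun s : ℂ => ((s - 1) * riemannZeta s) ^ k) s :=
      (((differentiableAt_id.sub_const 1).mul (differentiableAt_riemannZeta hs')).pow k)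
    refine hd.congr_of_eventuallyEq ?_
    filter_upwards [isOpen_ne.mem_nhds hs'] with z hz
    exact Function.update_of_ne hz _ _
  · rw [zetaPowAux, continuousAt_update_same]
    simpa using riemannZeta_residue_one.pow k

lemma LSeries_dk (k : ℕ) {s : ℂ} (hs : 1 < s.re) :
    LSeries (fun n => (dk k n : ℂ)) s = riemannZeta s ^ k := by
  suffices h : LSeriesHasSum (fun n => (dk k n : ℂ)) s (riemannZeta s ^ k) from h.LSeries_eq
  induction k with
  | zero =>
    rw [pow_zero]
    have h : LSeries.term (fun n => (dk 0 n : ℂ)) s 1 = 1 := by simp [LSeries.term, dk]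
    rw [LSeriesHasSum, ← h]
    refine hasSum_single 1 fun n hn => ?_
    simp [LSeries.term, dk, ArithmeticFunction.one_apply_ne hn]
  | succ k ih =>
    have h := ArithmeticFunction.LSeriesHasSum_mul
      (f := ((ArithmeticFunction.zeta ^ k : ArithmeticFunction ℕ) : ArithmeticFunction ℂ))
      (g := ((ArithmeticFunction.zeta : ArithmeticFunction ℕ) : ArithmeticFunction ℂ))
      ih (ArithmeticFunction.LSeriesHasSum_zeta hs)
    rw [← ArithmeticFunction.natCoe_mul, ← pow_succ, ← pow_succ] at h
    exact h

lemma exists_summatory_dk_le (k : ℕ) {r : ℝ} (hr : 1 < r) :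
    ∃ C : ℝ, ∀ x, 1 ≤ x → |summatory (fun n => (dk k n : ℝ)) x| ≤ C * x ^ r := by
  obtain ⟨C, -, hC⟩ := (logPolyApprox_summatory_dk k).exists_abs_le (sub_pos.2 hr)
  refine ⟨C, fun x hx => ?_⟩
  have hx0 : 0 < x := by linarith
  have h := hC x hx
  rw [abs_div, abs_of_pos hx0, div_le_iff₀ hx0, mul_assoc, ← Real.rpow_add_one hx0.ne',
    sub_add_cancel] at h
  exact h

lemma tailBound_summatory_dk (k : ℕ) {r : ℝ} (hr : 1 < r) : TailBound
    ((Set.Ioi 1).indicator fun t => (summatory (fun n => (dk k n : ℝ)) t : ℂ)) r := by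
  obtain ⟨C, hC⟩ := exists_summatory_dk_le k hr
  refine TailBound.indicator (C := C) (measurable_ofReal.comp (measurable_summatory _))
    fun t ht => ?_
  rw [Complex.norm_real]
  exact hC t ht

lemma mellin_summatory_dk (k : ℕ) {s : ℂ} (hs : 1 < s.re) :
    mellin ((Set.Ioi 1).indicator fun t => (summatory (fun n => (dk k n : ℝ)) t : ℂ)) (-s)
      = riemannZeta s ^ k / s := by
  have hs0 : s ≠ 0 := fun h => by norm_num [h] at hs
  obtain ⟨r, hr, hrs⟩ := exists_between hs
  obtain ⟨C, hC⟩ := exists_summatory_dk_le k hr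
  have hO : (fun n : ℕ => ∑ j ∈ Icc 1 n, (dk k j : ℝ)) =O[atTop] fun n => (n : ℝ) ^ r := by
    refine IsBigO.of_bound C ?_
    filter_upwards [eventually_ge_atTop 1] with n hn
    have h := hC n (by exact_mod_cast hn)
    rw [Real.norm_of_nonneg (Real.rpow_nonneg (Nat.cast_nonneg n) r)]
    simpa [summatory] using h
  have h := LSeries_eq_mul_integral_of_nonneg (fun n => (dk k n : ℝ)) (by linarith) hrs hO
    fun n => Nat.cast_nonneg _
  simp only [ofReal_natCast] at h
  rw [LSeries_dk k hs] at h
  rw [h, mul_div_cancel_left₀ _ hs0, mellin_indicator_Ioi_one]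
  refine setIntegral_congr_fun measurableSet_Ioi fun t _ => ?_
  simp only [summatory]
  push_cast
  rw [neg_add', mul_comm]

lemma hasMellin_sum_log_pow (q : ℕ → ℂ) (N : ℕ) {s : ℂ} (hs : 1 < s.re) :
    HasMellin (fun t : ℝ => ∑ j ∈ range N, q j • ((t : ℂ) ^ (1 : ℂ) •
        ((Real.log t ^ j) • (Set.Ioi 1).indicator (fun _ => (1 : ℂ)) t))) (-s)
      (∑ j ∈ range N, q j * (j.factorial / (s - 1) ^ (j + 1))) := by
  have hre : (-s + 1).re < -0 := by rw [add_re, neg_re, one_re]; linarith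
  have hs1 : s - 1 ≠ 0 := fun h => by
    rw [sub_eq_zero.1 h, one_re] at hs
    exact lt_irrefl _ hs
  have hterm : ∀ j, HasMellin (fun t : ℝ => q j • ((t : ℂ) ^ (1 : ℂ) •
        ((Real.log t ^ j) • (Set.Ioi 1).indicator (fun _ => (1 : ℂ)) t))) (-s)
      (q j * (j.factorial / (s - 1) ^ (j + 1))) := by
    intro j
    have hc := MellinConvergent.cpow_smul.2
      (tailBound_indicator_one.mellinConvergent_log_pow_smul hre j)
    refine ⟨hc.const_smul (q j), ?_⟩
    rw [mellin_const_smul, mellin_cpow_smul, mellin_log_pow_indicator j (by simpa using hre),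
      smul_eq_mul, show -s + 1 = -1 * (s - 1) by ring, mul_pow]
    have : ((-1 : ℂ) ^ (j + 1)) ≠ 0 := pow_ne_zero _ (by norm_num)
    rw [mul_div_mul_left _ _ this]
  induction N with
  | zero => exact ⟨by simp [MellinConvergent], by simp [mellin]⟩
  | succ N ih =>
    simp only [Finset.sum_range_succ]
    have h := hasMellin_add ih.1 (hterm N).1
    rw [ih.2, (hterm N).2] at h
    exact h

/-- The Mellin transform of the remainder, in terms of `ζ(s)^k / s` and its polar part. -/
lemma mellin_remainder (k : ℕ) (Q : Polynomial ℝ) {N : ℕ} (hN : Q.natDegree < N) {s : ℂ}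
    (hs : 1 < s.re) :
    mellin ((Set.Ioi 1).indicator fun t =>
        ((summatory (fun n => (dk k n : ℝ)) t - t * Q.eval (Real.log t) : ℝ) : ℂ)) (-s)
      + ∑ j ∈ range N, (Q.coeff j : ℂ) * (j.factorial / (s - 1) ^ (j + 1))
      = riemannZeta s ^ k / s := by
  obtain ⟨r, hr, hrs⟩ := exists_between hs
  have h₁ := (tailBound_summatory_dk k hr).mellinConvergent (w := -s)
    (by rw [neg_re]; linarith)
  have h₂ := hasMellin_sum_log_pow (fun j => (Q.coeff j : ℂ)) N hs
  have h := (hasMellin_sub h₁ h₂.1).2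
  rw [h₂.2, mellin_summatory_dk k hs] at h
  rw [← eq_sub_iff_add_eq, ← h]
  congr 1
  funext t
  by_cases ht : t ∈ Set.Ioi (1 : ℝ)
  · simp only [Set.indicator_of_mem ht, Polynomial.eval_eq_sum_range' hN]
    push_cast
    rw [Finset.mul_sum]
    congr 1
    refine Finset.sum_congr rfl fun j _ => ?_
    rw [cpow_one, smul_eq_mul, smul_eq_mul, real_smul, ofReal_pow]
    ring
  · simp [Set.indicator_of_notMem ht]

/-- The `i`-th Taylor coefficient at `1` of `(s - 1)^k ζ(s)^k / s`. -/
noncomputable def altLamSum (k i : ℕ) : ℝ :=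
  (-1 : ℝ) ^ i * ∑ l ∈ range (i + 1), (-1 : ℝ) ^ l * lam k l / l.factorial

lemma re_alternating_sum_taylorCoeffOne (k i : ℕ) :
    ((-1 : ℂ) ^ i * ∑ l ∈ range (i + 1), (-1) ^ l * taylorCoeffOne (zetaPowAux k) l).re
      = altLamSum k i := by
  have hre : ∀ (m : ℕ) (z : ℂ), ((-1 : ℂ) ^ m * z).re = (-1 : ℝ) ^ m * z.re := fun m z => by
    rw [show (-1 : ℂ) ^ m = (((-1 : ℝ) ^ m : ℝ) : ℂ) by push_cast; rfl, re_ofReal_mul]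
  rw [hre, re_sum, altLamSum]
  congr 1
  refine Finset.sum_congr rfl fun l _ => ?_
  rw [hre, taylorCoeffOne, div_natCast_re, lam, mul_div_assoc]

lemma altLamSum_add_succ (k i : ℕ) :
    altLamSum k i + altLamSum k (i + 1) = lam k (i + 1) / (i + 1).factorial := by
  have h : ((-1 : ℝ) ^ (i + 1)) * (-1) ^ (i + 1) = 1 := by rw [← mul_pow]; norm_num
  rw [altLamSum, altLamSum, Finset.sum_range_succ _ (i + 1), mul_add, mul_div_assoc,
    ← mul_assoc _ _ (lam k (i + 1) / _), h]
  ring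

lemma aCoef_eq_altLamSum (k j : ℕ) : aCoef k j = altLamSum k (k - 1 - j) := rfl

lemma eventuallyEq_clearPoles (k d : ℕ) {G : ℂ → ℂ} {q : ℕ → ℂ} (hG : AnalyticAt ℂ G 1)
    (h : ∀ s : ℂ, 1 < s.re → G s + ∑ j ∈ range (k + d), q j * (j.factorial / (s - 1) ^ (j + 1))
      = riemannZeta s ^ k / s) :
    (fun s => s * clearPoles G q (k + d) s) =ᶠ[𝓝 1] fun s => (s - 1) ^ d * zetaPowAux k s := by
  have hA : AnalyticAt ℂ (fun s => s * clearPoles G q (k + d) s) 1 :=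
    analyticAt_id.mul (analyticAt_clearPoles hG _)
  refine (hA.frequently_eq_iff_eventually_eq
    (analyticAt_sub_one_pow_mul (analyticAt_zetaPowAux k) d)).1 ?_
  have hreal : ∃ᶠ x : ℝ in 𝓝[>] 1, (x : ℂ) * clearPoles G q (k + d) x
      = ((x : ℂ) - 1) ^ d * zetaPowAux k x := by
    refine Eventually.frequently ?_
    filter_upwards [self_mem_nhdsWithin] with x hx
    have hx1 : (1 : ℝ) < x := hx
    have hxne : (x : ℂ) ≠ 1 := by exact_mod_cast hx1.ne'
    have hx0 : (x : ℂ) ≠ 0 := by exact_mod_cast (by linarith : x ≠ 0)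
    rw [clearPoles_eq hxne, h _ (by simpa using hx1), zetaPowAux, Function.update_of_ne hxne,
      mul_pow, pow_add]
    field_simp
  refine Tendsto.frequently (f := fun x : ℝ => (x : ℂ)) ?_ hreal
  refine tendsto_nhdsWithin_iff.2 ⟨?_, ?_⟩
  · exact (continuous_ofReal.tendsto' 1 1 ofReal_one).mono_left nhdsWithin_le_nhds
  · filter_upwards [self_mem_nhdsWithin] with x hx
    have hx1 : (1 : ℝ) < x := hx
    simpa using hx1.ne'

lemma Deltak_eq_of_coeff {k d : ℕ} {Q : Polynomial ℝ} (hd : Q.natDegree < k + d)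
    (hlow : ∀ j < k, aCoef k j = j.factorial * Q.coeff j)
    (hhigh : ∀ j < d, Q.coeff (k + j) = 0) (x : ℝ) :
    Deltak k x = summatory (fun n => (dk k n : ℝ)) x - x * Q.eval (Real.log x) := by
  have hhigh' : ∑ j ∈ range d, Q.coeff (k + j) * Real.log x ^ (k + j) = 0 :=
    Finset.sum_eq_zero fun j hj => by rw [hhigh j (mem_range.1 hj), zero_mul]
  rw [Deltak, summatory, Polynomial.eval_eq_sum_range' hd, Finset.sum_range_add, hhigh', add_zero]
  congr 2
  refine Finset.sum_congr rfl fun j hj => ?_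
  rw [hlow j (mem_range.1 hj), mul_div_cancel_left₀ _ (by positivity)]

/-- The main term of `∑ d_k(n)` is `x P_k(log x)`, with a power saving, and the Mellin transform
of `Δ_k` is the regular part of `ζ(s)^k / s` at `s = 1`. -/
lemma exists_tailBound_Deltak (k : ℕ) : ∃ a < 1,
    TailBound ((Set.Ioi 1).indicator fun t => (Deltak k t : ℂ)) a ∧ ∀ m,
      (taylorCoeffOne (fun s =>
        mellin ((Set.Ioi 1).indicator fun t => (Deltak k t : ℂ)) (-s)) m).re
        = altLamSum k (k + m) := by
  obtain ⟨Q, δ, hδ, C, hC⟩ := logPolyApprox_summatory_dk k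
  set d := Q.natDegree + 1 with hd
  set D : ℝ → ℝ := fun t => summatory (fun n => (dk k n : ℝ)) t - t * Q.eval (Real.log t) with hD
  have hN : Q.natDegree < k + d := by omega
  have htail : TailBound ((Set.Ioi 1).indicator fun t => (D t : ℂ)) (1 - δ) := by
    refine TailBound.indicator (C := C) (measurable_ofReal.comp
      ((measurable_summatory _).sub (measurable_id.mul
        (Q.continuous.measurable.comp Real.measurable_log)))) fun t ht => ?_
    have ht0 : 0 < t := by linarith
    have h := mul_le_mul_of_nonneg_right (hC t ht) ht0.le
    rw [mul_assoc, ← Real.rpow_add_one ht0.ne', neg_add_eq_sub] at h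
    refine le_trans (le_of_eq ?_) h
    rw [Complex.norm_real, Real.norm_eq_abs, ← abs_of_pos ht0, ← abs_mul, abs_of_pos ht0, hD]
    congr 1
    field_simp
  set G : ℂ → ℂ := fun s => mellin ((Set.Ioi 1).indicator fun t => (D t : ℂ)) (-s)
  have hG : AnalyticAt ℂ G 1 :=
    (htail.analyticAt_mellin (w := -1) (by simpa using hδ)).comp_of_eq analyticAt_id.neg rfl
  obtain ⟨hlow, hhigh⟩ := taylorCoeffOne_of_id_mul_eq
    (analyticAt_clearPoles (q := fun j => (Q.coeff j : ℂ)) hG (k + d)) (analyticAt_zetaPowAux k)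
    (eventuallyEq_clearPoles k d hG fun s hs => mellin_remainder k Q hN hs)
  have hDelta : Deltak k = D := by
    funext x
    refine Deltak_eq_of_coeff hN (fun j hj => ?_) (fun j hj => ?_) x
    · have h := hhigh (k - 1 - j)
      have hidx : k + d = j + 1 + (k - 1 - j + d) := by omega
      rw [hidx, taylorCoeffOne_clearPoles_polar hG] at h
      rw [aCoef_eq_altLamSum, ← re_alternating_sum_taylorCoeffOne, ← h, ← ofReal_natCast,
        re_ofReal_mul, ofReal_re]
    · have h := hlow (d - 1 - j) (by omega)
      have hidx : k + d = k + j + 1 + (d - 1 - j) := by omega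
      rw [hidx, taylorCoeffOne_clearPoles_polar hG] at h
      have hfac : ((k + j).factorial : ℂ) ≠ 0 := by exact_mod_cast (k + j).factorial_ne_zero
      exact_mod_cast (mul_eq_zero.1 h).resolve_left hfac
  rw [hDelta]
  refine ⟨1 - δ, by linarith, htail, fun m => ?_⟩
  rw [← re_alternating_sum_taylorCoeffOne, ← hhigh, show k + m + d = m + (k + d) by omega,
    taylorCoeffOne_clearPoles_regular hG]

lemma cpow_mul_log_pow_indicator (g : ℝ → ℝ) (m : ℕ) :
    Set.EqOn (fun t : ℝ => (t : ℂ) ^ (-1 - 1 : ℂ) •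
        ((Real.log t ^ m) • (Set.Ioi 1).indicator (fun t => (g t : ℂ)) t))
      (fun t => ((g t * Real.log t ^ m / t ^ 2 : ℝ) : ℂ)) (Set.Ioi 1) := by
  intro t ht
  simp only [Set.indicator_of_mem ht]
  rw [show (-1 - 1 : ℂ) = -((2 : ℕ) : ℂ) by norm_num, cpow_neg, cpow_natCast, real_smul,
    smul_eq_mul]
  push_cast
  ring

lemma TailBound.integrableOn_mul_log_pow {g : ℝ → ℝ} {a : ℝ} (ha : a < 1)
    (hg : TailBound ((Set.Ioi 1).indicator fun t => (g t : ℂ)) a) (m : ℕ) :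
    IntegrableOn (fun x => g x * Real.log x ^ m / x ^ 2) (Set.Ioi 1) := by
  have h := (hg.mellinConvergent_log_pow_smul (w := -1) (by simpa using ha) m).mono_set
    (Set.Ioi_subset_Ioi (zero_le_one (α := ℝ)))
  exact (h.congr_fun (cpow_mul_log_pow_indicator g m) measurableSet_Ioi).re

lemma TailBound.integral_mul_log_pow {g : ℝ → ℝ} {a : ℝ} (ha : a < 1)
    (hg : TailBound ((Set.Ioi 1).indicator fun t => (g t : ℂ)) a) (m : ℕ) :
    ∫ x in Set.Ioi (1 : ℝ), g x * Real.log x ^ m / x ^ 2 = (-1) ^ m * m.factorial *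
      (taylorCoeffOne (fun s =>
        mellin ((Set.Ioi 1).indicator fun t => (g t : ℂ)) (-s)) m).re := by
  have hfac : (m.factorial : ℝ) ≠ 0 := by positivity
  have hmellin : mellin (fun t => (Real.log t ^ m) •
      (Set.Ioi 1).indicator (fun t => (g t : ℂ)) t) (-1)
      = ((∫ x in Set.Ioi (1 : ℝ), g x * Real.log x ^ m / x ^ 2 : ℝ) : ℂ) := by
    rw [← integral_complex_ofReal, mellin,
      ← setIntegral_congr_fun measurableSet_Ioi (cpow_mul_log_pow_indicator g m)]
    refine setIntegral_eq_of_subset_of_forall_sdiff_eq_zero measurableSet_Ioi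
      (Set.Ioi_subset_Ioi (zero_le_one (α := ℝ))) fun t ht => ?_
    simp [Set.indicator_of_notMem ht.2]
  rw [taylorCoeffOne, iteratedDeriv_comp_neg,
    hg.iteratedDeriv_mellin m (by simpa using ha), hmellin, div_natCast_re, smul_eq_mul,
    show (-1 : ℂ) ^ m = (((-1 : ℝ) ^ m : ℝ) : ℂ) by push_cast; rfl, re_ofReal_mul, ofReal_re]
  have hsign : ((-1 : ℝ) ^ m) * (-1) ^ m = 1 := by rw [← mul_pow]; norm_num
  field_simp
  rw [sq, hsign, mul_one]

lemma sum_choose_mul_altLamSum (k n : ℕ) :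
    ∑ j ∈ range (n + 1), (n.choose j : ℝ) * altLamSum k (k + j) = (-1) ^ n * ell k n := by
  cases n with
  | zero => simp [ell, altLamSum]
  | succ p =>
    have hsign : ((-1 : ℝ) ^ (p + 1)) * (-1) ^ (p + 1) = 1 := by rw [← mul_pow]; norm_num
    rw [ell, if_pos (by simp), Int.toNat_natCast, ← mul_assoc, hsign, one_mul,
      Finset.sum_choose_succ_mul (fun j _ => altLamSum k (k + j)), ← Finset.sum_add_distrib,
      ← Finset.Ico_succ_right_eq_Icc, Finset.sum_Ico_eq_sum_range]
    refine Finset.sum_congr rfl fun j _ => ?_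
    have h := altLamSum_add_succ k (k + j)
    rw [← mul_add, ← add_assoc k j 1, h,
      show 1 + j + k = k + j + 1 by omega, Nat.add_sub_cancel, Nat.add_sub_cancel_left,
      mul_div_assoc]

theorem stmt3 (k : ℕ) (hk : 0 < k) (n : ℕ) :
    IntegrableOn (fun x : ℝ => Deltak k x * laguerre n (Real.log x) / x ^ 2) (Set.Ioi 1) ∧
    ∫ x in Set.Ioi (1 : ℝ), Deltak k x * laguerre n (Real.log x) / x ^ 2
      = (-1 : ℝ) ^ n * ell k n := by
  obtain ⟨a, ha, htail, hcoeff⟩ := exists_tailBound_Deltak k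
  have hexp : (fun x : ℝ => Deltak k x * laguerre n (Real.log x) / x ^ 2) = fun x =>
      ∑ j ∈ range (n + 1), (n.choose j : ℝ) * (-1) ^ j / j.factorial *
        (Deltak k x * Real.log x ^ j / x ^ 2) := by
    funext x
    rw [laguerre, Finset.mul_sum, Finset.sum_div]
    exact Finset.sum_congr rfl fun j _ => by ring
  have hterm : ∀ j ∈ range (n + 1), IntegrableOn (fun x => (n.choose j : ℝ) * (-1) ^ j /
      j.factorial * (Deltak k x * Real.log x ^ j / x ^ 2)) (Set.Ioi 1) :=
    fun j _ => (htail.integrableOn_mul_log_pow ha j).const_mul _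
  rw [hexp]
  refine ⟨integrable_finsetSum _ hterm, ?_⟩
  rw [integral_finsetSum _ hterm, ← sum_choose_mul_altLamSum]
  refine Finset.sum_congr rfl fun j _ => ?_
  have hsign : ((-1 : ℝ) ^ j) * (-1) ^ j = 1 := by rw [← mul_pow]; norm_num
  have hfac : (j.factorial : ℝ) ≠ 0 := by positivity
  rw [integral_const_mul, htail.integral_mul_log_pow ha, hcoeff]
  field_simp
  rw [sq, hsign, mul_one]
end
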